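/- arXiv:1204.4999 — 2 statements merged into one kernel-verified Lean document; each statement's English description precedes it below -/
import Mathlib

section
/- The maps θ and ω are chain maps and θ is a retraction of ω: θ₀ ∘ δ = Δ₁ ∘ θ₁, δ ∘ ω₁ = ω₀ ∘ Δ₁, θ₀ ∘ ω₀ = id on C₀, and θ₁ ∘ ω₁ = id on C₁. -/
noncomputable section

/-- The differential `δ : F → F` (degree 1 → degree 0) on formal series
`F = (ℕ → ℚ)`, dual of `d` on `Λ(t,dt)`: `(δμ)(0) = 0`, `(δμ)(j) = j·μ(j-1)`. -/
def deltaDiff : (ℕ → ℚ) →ₗ[ℚ] (ℕ → ℚ) where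
  toFun μ := fun j => if j = 0 then 0 else (j : ℚ) * μ (j - 1)
  map_add' μ ν := by
    funext j
    by_cases h : j = 0 <;> simp [h, mul_add]
  map_smul' a μ := by
    funext j
    by_cases h : j = 0 <;> simp [h, smul_eq_mul] <;> ring

/-- `C₀ = ℚy ⊕ ℚz`, modelled as `ℚ × ℚ` (coefficients of `y` and `z`). -/
def ey : ℚ × ℚ := (1, 0)
def ez : ℚ × ℚ := (0, 1)

/-- `θ` in degree 0: `θ₀(λ) = -λ(0)·y + λ(1)·(y - z)`. -/
def theta0 : (ℕ → ℚ) →ₗ[ℚ] ℚ × ℚ where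
  toFun l := (-(l 0)) • ey + (l 1) • (ey - ez)
  map_add' l m := by
    simp only [Pi.add_apply]
    module
  map_smul' a l := by
    simp only [Pi.smul_apply, smul_eq_mul, RingHom.id_apply]
    module

/-- `θ` in degree 1: `θ₁(μ) = μ(0)·c`, with `C₁ = ℚc` modelled as `ℚ`. -/
def theta1 : (ℕ → ℚ) →ₗ[ℚ] ℚ := LinearMap.proj 0

/-- The differential of `C`: `Δ₁ c = y - z`. -/
def delta1C : ℚ →ₗ[ℚ] ℚ × ℚ := LinearMap.toSpanSingleton ℚ (ℚ × ℚ) (ey - ez)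

/-- The indicator function of `0` (the series `α₀`). -/
def ind0 : ℕ → ℚ := fun j => if j = 0 then 1 else 0

/-- `ω` in degree 0: `ω₀(y) = -α₀`, `ω₀(z) = -∑_i α_i` (the negated constant `1`). -/
def omega0 : ℚ × ℚ →ₗ[ℚ] (ℕ → ℚ) :=
  (LinearMap.toSpanSingleton ℚ (ℕ → ℚ) (-ind0)).comp (LinearMap.fst ℚ ℚ ℚ) +
    (LinearMap.toSpanSingleton ℚ (ℕ → ℚ) (-fun _ => (1 : ℚ))).comp (LinearMap.snd ℚ ℚ ℚ)

/-- `ω` in degree 1: `ω₁(c) = ∑_i β_i/(i+1)`, i.e. the series `j ↦ 1/(j+1)`. -/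
def omega1 : ℚ →ₗ[ℚ] (ℕ → ℚ) :=
  LinearMap.toSpanSingleton ℚ (ℕ → ℚ) (fun j => 1 / ((j : ℚ) + 1))

theorem deltaDiff_apply_zero (μ : ℕ → ℚ) : deltaDiff μ 0 = 0 := rfl

theorem deltaDiff_apply_succ (μ : ℕ → ℚ) (j : ℕ) :
    deltaDiff μ (j + 1) = ((j : ℚ) + 1) * μ j := by
  simp [deltaDiff]

theorem theta0_apply (l : ℕ → ℚ) : theta0 l = (-(l 0)) • ey + (l 1) • (ey - ez) := rfl

theorem theta1_apply (μ : ℕ → ℚ) : theta1 μ = μ 0 := rfl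

theorem delta1C_apply (a : ℚ) : delta1C a = a • (ey - ez) := rfl

theorem omega0_ey : omega0 ey = -ind0 := by
  simp [omega0, ey]

theorem omega0_ez : omega0 ez = -1 := by
  ext j
  simp [omega0, ez]

theorem omega1_one : omega1 1 = fun j : ℕ => 1 / ((j : ℚ) + 1) :=
  one_smul ℚ _

theorem linearMap_ext_ey_ez {M : Type*} [AddCommMonoid M] [Module ℚ M] {f g : ℚ × ℚ →ₗ[ℚ] M}
    (hy : f ey = g ey) (hz : f ez = g ez) : f = g :=
  LinearMap.prod_ext (LinearMap.ext_ring hy) (LinearMap.ext_ring hz)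

/-- The Poincaré lemma for `Λ(t,dt)`, dualized: the primitive is termwise integration, which is
where the coefficients `1/(j+1)` of `ω₁(c)` come from. -/
theorem deltaDiff_shift_div_succ (l : ℕ → ℚ) :
    deltaDiff (fun j => l (j + 1) / ((j : ℚ) + 1)) = l - l 0 • ind0 := by
  ext j
  cases j with
  | zero => simp [deltaDiff_apply_zero, ind0]
  | succ j =>
    have hj : (j : ℚ) + 1 ≠ 0 := j.cast_add_one_ne_zero
    simp [deltaDiff_apply_succ, ind0, mul_div_cancel₀ _ hj]

theorem deltaDiff_omega1_one : deltaDiff (omega1 1) = 1 - ind0 := by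
  simpa [omega1_one] using deltaDiff_shift_div_succ 1

theorem theta0_ind0 : theta0 ind0 = -ey := by
  simp [theta0_apply, ind0]

theorem theta0_one : theta0 1 = -ez := by
  simp only [theta0_apply, Pi.one_apply]
  module

theorem theta0_comp_deltaDiff : theta0.comp deltaDiff = delta1C.comp theta1 := by
  refine LinearMap.ext fun μ => ?_
  have hδ : deltaDiff μ 1 = μ 0 := by simpa using deltaDiff_apply_succ μ 0
  simp [theta0_apply, theta1_apply, delta1C_apply, deltaDiff_apply_zero, hδ]

theorem deltaDiff_comp_omega1 : deltaDiff.comp omega1 = omega0.comp delta1C := by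
  refine LinearMap.ext_ring ?_
  calc
    deltaDiff (omega1 1) = 1 - ind0 := deltaDiff_omega1_one
    _ = omega0 ey - omega0 ez := by rw [omega0_ey, omega0_ez]; abel
    _ = omega0 (delta1C 1) := by rw [delta1C_apply, one_smul, map_sub]

theorem theta0_comp_omega0 : theta0.comp omega0 = LinearMap.id := by
  refine linearMap_ext_ey_ez ?_ ?_
  · simp [omega0_ey, theta0_ind0]
  · simp [omega0_ez, theta0_one]

theorem theta1_comp_omega1 : theta1.comp omega1 = LinearMap.id := by
  refine LinearMap.ext_ring ?_
  simp [theta1_apply, omega1_one]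

/-- `θ` and `ω` are chain maps and `θ` is a retraction of `ω`:
`θ₀ ∘ δ = Δ₁ ∘ θ₁`, `δ ∘ ω₁ = ω₀ ∘ Δ₁`, `θ₀ ∘ ω₀ = id` and `θ₁ ∘ ω₁ = id`. -/
theorem theta_omega_chain_retract :
    theta0.comp deltaDiff = delta1C.comp theta1 ∧
    deltaDiff.comp omega1 = omega0.comp delta1C ∧
    theta0.comp omega0 = LinearMap.id ∧
    theta1.comp omega1 = LinearMap.id :=
  ⟨theta0_comp_deltaDiff, deltaDiff_comp_omega1, theta0_comp_omega0, theta1_comp_omega1⟩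

end
end

section
/- Multiplication by (1/2)(x² − x) is an injective ℚ-linear endomorphism of the polynomial ring ℚ[x], and its cokernel, the quotient ring ℚ[x]/(x² − x), is isomorphic as a ℚ-algebra to ℚ × ℚ. Consequently, the two-term cochain complex ℚ[x]·y → ℚ[x] with differential q(x)·y ↦ (1/2)·q(x)·(x²−x) has cohomology concentrated in degree 0, isomorphic to ℚ × ℚ. -/
open Polynomial

noncomputable section

/-- The differential of the cochain algebra `𝒞^∞(𝕃(u),∂) = (Λ(x,y),d)` in the
only nontrivial degree: multiplication by `(1/2)(x² - x)` on `ℚ[x]`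
(`q(x)·y ↦ (1/2)·q(x)·(x² - x)`). -/
def dLS : Polynomial ℚ →ₗ[ℚ] Polynomial ℚ :=
  LinearMap.mulLeft ℚ (Polynomial.C (1/2 : ℚ) * (Polynomial.X ^ 2 - Polynomial.X))

section TwoPoints

variable {R : Type*} [CommRing R]

/-- Evaluation of polynomials at the two points `a` and `b`, as an algebra homomorphism: the
restriction of functions from the affine line to `{a, b}`. -/
def evalPair (a b : R) : R[X] →ₐ[R] R × R :=
  (aeval a).prod (aeval b)

theorem evalPair_apply (a b : R) (p : R[X]) : evalPair a b p = (p.eval a, p.eval b) := by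
  simp only [evalPair, AlgHom.prod_apply, coe_aeval_eq_eval]

theorem evalPair_surjective {a b : R} (h : IsUnit (a - b)) :
    Function.Surjective (evalPair a b) := by
  rintro ⟨c, d⟩
  obtain ⟨u, hu⟩ := h.exists_right_inv
  -- the interpolating polynomial of degree at most one
  refine ⟨C d + C ((c - d) * u) * (X - C b), ?_⟩
  have eval_left : d + (c - d) * u * (a - b) = c := by linear_combination (c - d) * hu
  simp [evalPair_apply, eval_left]

theorem evalPair_eq_zero_iff {a b : R} (h : IsUnit (a - b)) {p : R[X]} :
    evalPair a b p = 0 ↔ (X - C a) * (X - C b) ∣ p := by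
  rw [evalPair_apply, Prod.mk_eq_zero, ← IsRoot.def, ← IsRoot.def, ← dvd_iff_isRoot,
    ← dvd_iff_isRoot]
  exact ⟨fun ⟨ha, hb⟩ ↦ (isCoprime_X_sub_C_of_isUnit_sub h).mul_dvd ha hb,
    fun hab ↦ ⟨dvd_of_mul_right_dvd hab, dvd_of_mul_left_dvd hab⟩⟩

theorem ker_evalPair {a b : R} (h : IsUnit (a - b)) :
    RingHom.ker (evalPair a b) = Ideal.span {(X - C a) * (X - C b)} := by
  ext p
  rw [RingHom.mem_ker, evalPair_eq_zero_iff h, Ideal.mem_span_singleton]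

/-- The Chinese remainder isomorphism `R[X] ⧸ ((X - a) (X - b)) ≃ R × R` for two points whose
difference is a unit, induced by evaluation at `a` and `b`. -/
def quotientSpanXSubCMulXSubCAlgEquiv {a b : R} (h : IsUnit (a - b)) :
    (R[X] ⧸ Ideal.span {(X - C a) * (X - C b)}) ≃ₐ[R] R × R :=
  (Ideal.quotientEquivAlgOfEq R (ker_evalPair h).symm).trans
    (Ideal.quotientKerAlgEquivOfSurjective (evalPair_surjective h))

theorem X_sq_sub_X_eq_mul : (X ^ 2 - X : R[X]) = (X - C 0) * (X - C 1) := by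
  simp only [map_zero, map_one]
  ring

variable (R) in
/-- The quotient `R[X] ⧸ (X² - X)`, the ring of functions on the two points `0` and `1`, as the
product algebra `R × R`. -/
def quotientSpanXSqSubXAlgEquiv : (R[X] ⧸ Ideal.span {(X ^ 2 - X : R[X])}) ≃ₐ[R] R × R :=
  (Ideal.quotientEquivAlgOfEq R (by rw [X_sq_sub_X_eq_mul])).trans
    (quotientSpanXSubCMulXSubCAlgEquiv (a := 0) (b := 1) (by simp))

theorem X_sq_sub_X_ne_zero [Nontrivial R] : (X ^ 2 - X : R[X]) ≠ 0 := by
  rw [X_sq_sub_X_eq_mul]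
  exact ((monic_X_sub_C 0).mul (monic_X_sub_C 1)).ne_zero

end TwoPoints

theorem range_mulLeft_eq_span_singleton {R A : Type*} [CommSemiring R] [CommSemiring A]
    [Algebra R A] (a : A) :
    LinearMap.range (LinearMap.mulLeft R a) = (Ideal.span {a}).restrictScalars R := by
  ext b
  simp only [LinearMap.mem_range, LinearMap.mulLeft_apply, Submodule.restrictScalars_mem,
    Ideal.mem_span_singleton, dvd_def, eq_comm]

theorem isUnit_C_one_half : IsUnit (C (1 / 2 : ℚ)) :=
  isUnit_C.mpr (by norm_num)

theorem dLS_injective : Function.Injective dLS :=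
  mul_right_injective₀ (mul_ne_zero isUnit_C_one_half.ne_zero X_sq_sub_X_ne_zero)

theorem range_dLS :
    LinearMap.range dLS = (Ideal.span {(X ^ 2 - X : ℚ[X])}).restrictScalars ℚ := by
  rw [dLS, range_mulLeft_eq_span_singleton, Ideal.span_singleton_mul_left_unit isUnit_C_one_half]

/-- The degree-zero cohomology of `dLS : ℚ[x]·y → ℚ[x]`, that is the cokernel of `dLS`, as the
underlying vector space of the quotient ring `ℚ[x]/(x² - x)`. -/
def quotientRangeDLSEquiv :
    (ℚ[X] ⧸ LinearMap.range dLS) ≃ₗ[ℚ] ℚ[X] ⧸ Ideal.span {(X ^ 2 - X : ℚ[X])} :=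
  (Submodule.quotEquivOfEq _ _ range_dLS).trans (Submodule.Quotient.restrictScalarsEquiv ℚ _)

/-- Multiplication by `(1/2)(x² - x)` is an injective `ℚ`-linear endomorphism of
`ℚ[x]`; the quotient ring `ℚ[x]/(x² - x)` is isomorphic as a `ℚ`-algebra to
`ℚ × ℚ`; consequently the two-term cochain complex `ℚ[x]·y → ℚ[x]`,
`q(x)·y ↦ (1/2)q(x)(x² - x)`, has cohomology concentrated in degree 0,
where it is (`ℚ`-linearly) isomorphic to `ℚ × ℚ` — the model of `S⁰`. -/
theorem cochains_of_MC_dgl_model_S0 :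
    Function.Injective dLS ∧
    Nonempty ((Polynomial ℚ ⧸ Ideal.span ({Polynomial.X ^ 2 - Polynomial.X} : Set (Polynomial ℚ))) ≃ₐ[ℚ]
      (ℚ × ℚ)) ∧
    Nonempty ((Polynomial ℚ ⧸ LinearMap.range dLS) ≃ₗ[ℚ] (ℚ × ℚ)) := by
  exact ⟨dLS_injective, ⟨quotientSpanXSqSubXAlgEquiv ℚ⟩,
    ⟨quotientRangeDLSEquiv.trans (quotientSpanXSqSubXAlgEquiv ℚ).toLinearEquiv⟩⟩

end
end
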